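/- arXiv:2006.09076 — 2 statements merged into one kernel-verified Lean document; each statement's English description precedes it below -/
import Mathlib

section
/- Transport relation for the duality connected sum: for all nonnegative integers n,m, every (possibly empty) index k, and every nonempty index l, one has Z^D_{n,m}(k_→; l) = Z^D_{n,m}(k; l_↑) as an identity in [0,∞]. -/
open scoped Classical ENNReal

noncomputable section

/-- Last value of a tuple, with default `d` for the empty tuple. -/
def lastD {c : ℕ} (d : ℕ) (f : Fin c → ℕ) : ℕ :=
  if h : 0 < c then f ⟨c - 1, Nat.sub_lt h Nat.one_pos⟩ else d

/-- The duality connected sum `Z^D_{n,m}(k; l)`: the sum in `[0,∞]` of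
`(∏ nᵢ^(-kᵢ)) · (∏ m_j^(-l_j)) · nₐ!·m_b!/(nₐ+m_b)!` over
`n < n₁ < ⋯ < nₐ` and `m < m₁ < ⋯ < m_b` (with `nₐ := n` if `a = 0`,
`m_b := m` if `b = 0`). -/
def ZD (n m : ℕ) (k l : List ℕ) : ℝ≥0∞ :=
  ∑' p : (Fin k.length → ℕ) × (Fin l.length → ℕ),
    Set.indicator
      {p : (Fin k.length → ℕ) × (Fin l.length → ℕ) |
        (∀ i, n < p.1 i) ∧ StrictMono p.1 ∧ (∀ j, m < p.2 j) ∧ StrictMono p.2}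
      (fun p =>
        (∏ i, ((p.1 i : ℝ≥0∞) ^ k.get i)⁻¹) * (∏ j, ((p.2 j : ℝ≥0∞) ^ l.get j)⁻¹) *
          ((Nat.factorial (lastD n p.1) : ℝ≥0∞) * (Nat.factorial (lastD m p.2) : ℝ≥0∞) /
            (Nat.factorial (lastD n p.1 + lastD m p.2) : ℝ≥0∞))) p

/-- `k_↑`: increase the last entry of an index by `1` (`∅_↑ = ∅`). -/
def upLast : List ℕ → List ℕ
  | [] => []
  | k => k.dropLast ++ [k.getLast! + 1]


lemma zd_fact_le (a M : ℕ) :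
    (a + 1).factorial * (M + 1).factorial ≤ (a + (M + 1)).factorial := by
  induction M with
  | zero => simp
  | succ M ih =>
    rw [Nat.factorial_succ (M + 1), show a + (M + 1 + 1) = (a + (M + 1)) + 1 by ring,
      Nat.factorial_succ (a + (M + 1))]
    calc (a + 1).factorial * ((M + 1 + 1) * (M + 1).factorial)
        = (M + 1 + 1) * ((a + 1).factorial * (M + 1).factorial) := by ring
      _ ≤ _ := Nat.mul_le_mul (by omega) ih

/-- The real connector. -/
def zdT (a M : ℕ) : ℝ := (a.factorial : ℝ) * M.factorial / (a + M).factorial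

lemma zdT_nonneg (a M : ℕ) : 0 ≤ zdT a M := by unfold zdT; positivity

lemma zdT_le (a M : ℕ) (hM : 0 < M) : zdT a M ≤ 1 / ((a : ℝ) + 1) := by
  obtain ⟨M, rfl⟩ : ∃ M', M = M' + 1 := ⟨M - 1, by omega⟩
  unfold zdT
  rw [div_le_div_iff₀ (by positivity) (by positivity)]
  have h := zd_fact_le a M
  rw [Nat.factorial_succ a] at h
  have h' : (((a + 1) * a.factorial * (M + 1).factorial : ℕ) : ℝ) ≤
      ((a + (M + 1)).factorial : ℕ) := by exact_mod_cast h
  push_cast at h'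
  linarith

lemma zdT_step (a M : ℕ) (hM : 0 < M) :
    ((a + 1 : ℕ) : ℝ)⁻¹ * zdT (a + 1) M = (M : ℝ)⁻¹ * zdT a M - (M : ℝ)⁻¹ * zdT (a + 1) M := by
  unfold zdT
  have hM' : (M : ℝ) ≠ 0 := by positivity
  have h1 : ((a + M).factorial : ℝ) ≠ 0 := by positivity
  have h2 : ((a : ℝ) + M + 1) ≠ 0 := by positivity
  have h3 : ((a : ℝ) + 1) ≠ 0 := by positivity
  rw [show a + 1 + M = (a + M) + 1 by ring, Nat.factorial_succ, Nat.factorial_succ]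
  push_cast
  field_simp
  ring

lemma zdT_hasSum (a M : ℕ) (hM : 0 < M) :
    HasSum (fun j : ℕ => ((a + j + 1 : ℕ) : ℝ)⁻¹ * zdT (a + j + 1) M) ((M : ℝ)⁻¹ * zdT a M) := by
  rw [hasSum_iff_tendsto_nat_of_nonneg
    (fun j => mul_nonneg (by positivity) (zdT_nonneg _ _))]
  have h : ∀ N : ℕ, ∑ j ∈ Finset.range N, ((a + j + 1 : ℕ) : ℝ)⁻¹ * zdT (a + j + 1) M
      = (M : ℝ)⁻¹ * zdT a M - (M : ℝ)⁻¹ * zdT (a + N) M := by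
    intro N
    have := Finset.sum_range_sub' (fun j => (M : ℝ)⁻¹ * zdT (a + j) M) N
    simp only [add_zero] at this
    rw [← this]
    exact Finset.sum_congr rfl fun j _ => zdT_step (a + j) M hM
  simp only [h]
  have h0 : Filter.Tendsto (fun N => zdT (a + N) M) Filter.atTop (nhds 0) := by
    refine squeeze_zero (fun _ => zdT_nonneg _ _) (fun N => ?_)
      tendsto_one_div_add_atTop_nhds_zero_nat
    refine (zdT_le _ _ hM).trans ?_
    apply one_div_le_one_div_of_le (by positivity)
    push_cast
    have : (0 : ℝ) ≤ a := by positivity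
    linarith
  simpa using (h0.const_mul ((M : ℝ)⁻¹)).const_sub ((M : ℝ)⁻¹ * zdT a M)

lemma zdT_ofReal (a M : ℕ) : ENNReal.ofReal (zdT a M) =
    (a.factorial : ℝ≥0∞) * (M.factorial : ℝ≥0∞) / ((a + M).factorial : ℝ≥0∞) := by
  unfold zdT
  rw [ENNReal.ofReal_div_of_pos (by positivity), ENNReal.ofReal_mul (by positivity)]
  simp only [ENNReal.ofReal_natCast]

lemma zd_key (a M : ℕ) (hM : 0 < M) :
    ∑' N : ℕ, (if a < N then (N : ℝ≥0∞)⁻¹ * ((N.factorial : ℝ≥0∞) * (M.factorial : ℝ≥0∞) /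
      ((N + M).factorial : ℝ≥0∞)) else 0) =
    (M : ℝ≥0∞)⁻¹ * ((a.factorial : ℝ≥0∞) * (M.factorial : ℝ≥0∞) /
      ((a + M).factorial : ℝ≥0∞)) := by
  have hinj : Function.Injective (fun j : ℕ => a + j + 1) := fun x y h => by
    simp only at h; omega
  rw [← hinj.tsum_eq]
  · have hs := zdT_hasSum a M hM
    have h2 := ENNReal.ofReal_tsum_of_nonneg
      (f := fun j : ℕ => ((a + j + 1 : ℕ) : ℝ)⁻¹ * zdT (a + j + 1) M)
      (fun j => mul_nonneg (by positivity) (zdT_nonneg _ _)) hs.summable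
    rw [hs.tsum_eq, ENNReal.ofReal_mul (by positivity),
      ENNReal.ofReal_inv_of_pos (by positivity), ENNReal.ofReal_natCast, zdT_ofReal] at h2
    rw [h2]
    refine tsum_congr fun j => ?_
    rw [if_pos (by omega), ENNReal.ofReal_mul (by positivity),
      ENNReal.ofReal_inv_of_pos (by positivity), ENNReal.ofReal_natCast, zdT_ofReal]
  · intro N hN
    by_cases h : a < N
    · exact ⟨N - a - 1, by simp only; omega⟩
    · simp [h] at hN

/-- Version of `ZD` for index functions. -/
def ZDf (n m a b : ℕ) (k : Fin a → ℕ) (l : Fin b → ℕ) : ℝ≥0∞ :=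
  ∑' p : (Fin a → ℕ) × (Fin b → ℕ),
    Set.indicator
      {p : (Fin a → ℕ) × (Fin b → ℕ) |
        (∀ i, n < p.1 i) ∧ StrictMono p.1 ∧ (∀ j, m < p.2 j) ∧ StrictMono p.2}
      (fun p =>
        (∏ i, ((p.1 i : ℝ≥0∞) ^ k i)⁻¹) * (∏ j, ((p.2 j : ℝ≥0∞) ^ l j)⁻¹) *
          ((Nat.factorial (lastD n p.1) : ℝ≥0∞) * (Nat.factorial (lastD m p.2) : ℝ≥0∞) /
            (Nat.factorial (lastD n p.1 + lastD m p.2) : ℝ≥0∞))) p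

lemma ZD_eq_ZDf (n m a b : ℕ) (k l : List ℕ) (ha : k.length = a) (hb : l.length = b)
    (f : Fin a → ℕ) (g : Fin b → ℕ) (hf : ∀ i, k.get (Fin.cast ha.symm i) = f i)
    (hg : ∀ i, l.get (Fin.cast hb.symm i) = g i) :
    ZD n m k l = ZDf n m a b f g := by
  subst ha hb
  obtain rfl : k.get = f := funext hf
  obtain rfl : l.get = g := funext hg
  rfl

lemma lastD_succ {c : ℕ} (d : ℕ) (f : Fin (c + 1) → ℕ) : lastD d f = f (Fin.last c) := by
  unfold lastD
  rw [dif_pos (Nat.succ_pos c)]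
  rfl

lemma zd_cond {a : ℕ} (n N : ℕ) (p : Fin a → ℕ) :
    ((∀ i, n < (Fin.snoc p N : Fin (a + 1) → ℕ) i) ∧
      StrictMono (Fin.snoc p N : Fin (a + 1) → ℕ)) ↔
    ((∀ i, n < p i) ∧ StrictMono p) ∧ lastD n p < N := by
  constructor
  · rintro ⟨h1, h2⟩
    refine ⟨⟨fun i => by simpa using h1 i.castSucc, fun i j hij => ?_⟩, ?_⟩
    · simpa using h2 (Fin.castSucc_lt_castSucc_iff.2 hij)
    · cases a with
      | zero =>
        have h := h1 (Fin.last 0)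
        rw [Fin.snoc_last] at h
        simpa [lastD] using h
      | succ a =>
        rw [lastD_succ]
        simpa using h2 (Fin.castSucc_lt_last (Fin.last a))
  · rintro ⟨⟨h1, h2⟩, h3⟩
    have hN : n < N := by
      cases a with
      | zero => simpa [lastD] using h3
      | succ a => rw [lastD_succ] at h3; exact (h1 _).trans h3
    have hp : ∀ i, p i < N := by
      intro i
      cases a with
      | zero => exact i.elim0
      | succ a => rw [lastD_succ] at h3; exact (h2.monotone (Fin.le_last i)).trans_lt h3
    refine ⟨fun i => ?_, fun i j hij => ?_⟩
    · induction i using Fin.lastCases with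
      | last => simpa using hN
      | cast i => simpa using h1 i
    · induction j using Fin.lastCases with
      | last =>
        induction i using Fin.lastCases with
        | last => exact absurd hij (lt_irrefl _)
        | cast i => simpa using hp i
      | cast j =>
        induction i using Fin.lastCases with
        | last => exact absurd (hij.trans (Fin.castSucc_lt_last j)) (lt_irrefl _)
        | cast i => simpa using h2 (Fin.castSucc_lt_castSucc_iff.1 hij)

lemma ZDf_transport (n m a b : ℕ) (k : Fin a → ℕ) (l : Fin b → ℕ) (x : ℕ) :
    ZDf n m (a + 1) (b + 1) (Fin.snoc k 1) (Fin.snoc l x) =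
      ZDf n m a (b + 1) k (Fin.snoc l (x + 1)) := by
  unfold ZDf
  rw [ENNReal.tsum_prod', ENNReal.tsum_prod', ← (Fin.snocEquiv (fun _ => ℕ)).tsum_eq,
    ENNReal.tsum_prod', ENNReal.tsum_comm]
  refine tsum_congr fun p => ?_
  rw [ENNReal.tsum_comm]
  refine tsum_congr fun q => ?_
  simp only [Set.indicator_apply, Set.mem_ofPred_eq]
  by_cases hc : ((∀ i, n < p i) ∧ StrictMono p) ∧ (∀ j, m < q j) ∧ StrictMono q
  · have hM : 0 < q (Fin.last b) := (Nat.zero_le m).trans_lt (hc.2.1 _)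
    rw [if_pos (by tauto)]
    have key := zd_key (lastD n p) (q (Fin.last b)) hM
    have hq : (∏ j, ((q j : ℝ≥0∞) ^ (Fin.snoc l (x + 1) : Fin (b + 1) → ℕ) j)⁻¹) =
        (∏ j, ((q j : ℝ≥0∞) ^ (Fin.snoc l x : Fin (b + 1) → ℕ) j)⁻¹) *
          (q (Fin.last b) : ℝ≥0∞)⁻¹ := by
      rw [Fin.prod_univ_castSucc, Fin.prod_univ_castSucc]
      simp only [Fin.snoc_castSucc, Fin.snoc_last]
      rw [pow_succ, ENNReal.mul_inv (Or.inr (ENNReal.natCast_ne_top _))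
        (Or.inr (by exact_mod_cast hM.ne')), mul_assoc]
    rw [hq, lastD_succ m q, ← mul_assoc, mul_assoc _ (_⁻¹), ← key, ← ENNReal.tsum_mul_left]
    refine tsum_congr fun N => ?_
    have hz := zd_cond n N p
    simp only [Fin.snocEquiv, Equiv.coe_fn_mk, lastD_succ, Fin.snoc_last]
    by_cases hN : lastD n p < N
    · rw [if_pos hN, if_pos (by tauto), Fin.prod_univ_castSucc]
      simp only [Fin.snoc_castSucc, Fin.snoc_last, pow_one]
      ring
    · rw [if_neg hN, if_neg (by tauto), mul_zero]
  · rw [if_neg (by tauto), ENNReal.tsum_eq_zero]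
    intro N
    have hz := zd_cond n N p
    exact if_neg fun h => hc ⟨(hz.1 ⟨h.1, h.2.1⟩).1, h.2.2⟩

lemma zd_get_snoc (l : List ℕ) (x : ℕ) (h : (l ++ [x]).length = l.length + 1)
    (i : Fin (l.length + 1)) :
    (l ++ [x]).get (Fin.cast h.symm i) = (Fin.snoc l.get x : Fin (l.length + 1) → ℕ) i := by
  induction i using Fin.lastCases with
  | last => simp
  | cast i => simp

lemma upLast_append (l : List ℕ) (x : ℕ) : upLast (l ++ [x]) = l ++ [x + 1] := by
  have h : l ++ [x] ≠ [] := by simp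
  unfold upLast
  split
  · simp_all
  · next h' => simp [List.getLast!_eq_getLast?_getD]

/-- **Transport relation for the duality connected sum:**
`Z^D_{n,m}(k_→; l) = Z^D_{n,m}(k; l_↑)` in `[0,∞]`, for all `n, m ≥ 0`,
every (possibly empty) index `k` and every nonempty index `l`; here `k_→ = k ++ [1]`. -/
theorem ZD_transport_arrow (n m : ℕ) (k l : List ℕ)
    (hk1 : ∀ i ∈ k, 1 ≤ i) (hl : l ≠ []) (hl1 : ∀ i ∈ l, 1 ≤ i) :
    ZD n m (k ++ [1]) l = ZD n m k (upLast l) := by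
  obtain ⟨l', x, rfl⟩ : ∃ l' x, l = l' ++ [x] :=
    ⟨l.dropLast, l.getLast hl, (List.dropLast_append_getLast hl).symm⟩
  have hlen : ∀ (l : List ℕ) (x : ℕ), (l ++ [x]).length = l.length + 1 := by simp
  rw [upLast_append,
    ZD_eq_ZDf n m (k.length + 1) (l'.length + 1) (k ++ [1]) (l' ++ [x]) (hlen _ _) (hlen _ _)
      (Fin.snoc k.get 1) (Fin.snoc l'.get x) (zd_get_snoc _ _ (hlen _ _)) (zd_get_snoc _ _ (hlen _ _)),
    ZD_eq_ZDf n m k.length (l'.length + 1) k (l' ++ [x + 1]) rfl (hlen _ _)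
      k.get (Fin.snoc l'.get (x + 1)) (fun _ => rfl) (zd_get_snoc _ _ (hlen _ _))]
  exact ZDf_transport n m k.length l'.length k.get l'.get x
end
end

section
/- Transport relation for Hoffman's connected sum: let k be a nonempty index and let l be a nonempty index which is either admissible or equal to (1). Then, as an identity in [0,∞], Z^H(k_↑; l) = Z^H(k; ↑l) + T(k; ↑l). -/
open scoped Classical ENNReal

noncomputable section

/-- First value of a tuple, with default `d` for the empty tuple. -/
def headD {c : ℕ} (d : ℕ) (f : Fin c → ℕ) : ℕ :=
  if h : 0 < c then f ⟨0, h⟩ else d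

/-- Hoffman's connected sum `Z^H(k; l)`: the sum in `[0,∞]` of
`(∏_{i<a} nᵢ^(-kᵢ)) · nₐ^(-(kₐ-1)) · (m₁ - nₐ)⁻¹ · ∏_j m_j^(-l_j)`
over `0 < n₁ < ⋯ < nₐ < m₁ < ⋯ < m_b`. -/
def ZH (k l : List ℕ) : ℝ≥0∞ :=
  ∑' p : (Fin k.length → ℕ) × (Fin l.length → ℕ),
    Set.indicator
      {p : (Fin k.length → ℕ) × (Fin l.length → ℕ) |
        (∀ i, 0 < p.1 i) ∧ StrictMono p.1 ∧ StrictMono p.2 ∧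
          lastD 0 p.1 < headD 0 p.2}
      (fun p =>
        (∏ i, ((p.1 i : ℝ≥0∞) ^ (if i.1 = k.length - 1 then k.get i - 1 else k.get i))⁻¹) *
          ((headD 0 p.2 - lastD 0 p.1 : ℕ) : ℝ≥0∞)⁻¹ *
          ∏ j, ((p.2 j : ℝ≥0∞) ^ l.get j)⁻¹) p

/-- The multiple-zeta-type series `T(k; l)` of the concatenated index `(k, l)`:
the sum in `[0,∞]` of `(∏ nᵢ^(-kᵢ)) · (∏ m_j^(-l_j))` over
`0 < n₁ < ⋯ < nₐ < m₁ < ⋯ < m_b`. -/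
def Tser (k l : List ℕ) : ℝ≥0∞ :=
  ∑' p : (Fin k.length → ℕ) × (Fin l.length → ℕ),
    Set.indicator
      {p : (Fin k.length → ℕ) × (Fin l.length → ℕ) |
        (∀ i, 0 < p.1 i) ∧ StrictMono p.1 ∧ StrictMono p.2 ∧
          lastD 0 p.1 < headD 0 p.2}
      (fun p => (∏ i, ((p.1 i : ℝ≥0∞) ^ k.get i)⁻¹) * ∏ j, ((p.2 j : ℝ≥0∞) ^ l.get j)⁻¹) p


/-- `↑k`: increase the first entry of an index by `1` (`↑∅ = ∅`). -/
def upFirst : List ℕ → List ℕ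
  | [] => []
  | a :: k => (a + 1) :: k

/-- Length-indexed version of `ZH`. -/
def ZHf (a b : ℕ) (k l : ℕ → ℕ) : ℝ≥0∞ :=
  ∑' p : (Fin a → ℕ) × (Fin b → ℕ),
    Set.indicator
      {p : (Fin a → ℕ) × (Fin b → ℕ) |
        (∀ i, 0 < p.1 i) ∧ StrictMono p.1 ∧ StrictMono p.2 ∧
          lastD 0 p.1 < headD 0 p.2}
      (fun p =>
        (∏ i, ((p.1 i : ℝ≥0∞) ^ (if i.1 = a - 1 then k i - 1 else k i))⁻¹) *
          ((headD 0 p.2 - lastD 0 p.1 : ℕ) : ℝ≥0∞)⁻¹ *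
          ∏ j, ((p.2 j : ℝ≥0∞) ^ l j)⁻¹) p

/-- Length-indexed version of `Tser`. -/
def Tserf (a b : ℕ) (k l : ℕ → ℕ) : ℝ≥0∞ :=
  ∑' p : (Fin a → ℕ) × (Fin b → ℕ),
    Set.indicator
      {p : (Fin a → ℕ) × (Fin b → ℕ) |
        (∀ i, 0 < p.1 i) ∧ StrictMono p.1 ∧ StrictMono p.2 ∧
          lastD 0 p.1 < headD 0 p.2}
      (fun p => (∏ i, ((p.1 i : ℝ≥0∞) ^ k i)⁻¹) * ∏ j, ((p.2 j : ℝ≥0∞) ^ l j)⁻¹) p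

theorem ZH_eq (k l : List ℕ) :
    ZH k l = ZHf k.length l.length (fun i => k.getD i 0) (fun i => l.getD i 0) := by
  simp [ZH, ZHf]

theorem Tser_eq (k l : List ℕ) :
    Tser k l = Tserf k.length l.length (fun i => k.getD i 0) (fun i => l.getD i 0) := by
  simp [Tser, Tserf]

theorem core (n m : ℕ) (hn : 0 < n) (h : n < m) (x y : ℕ) :
    ((n : ℝ≥0∞) ^ (x + 1))⁻¹ * ((m - n : ℕ) : ℝ≥0∞)⁻¹ * ((m : ℝ≥0∞) ^ y)⁻¹ =
    ((n : ℝ≥0∞) ^ x)⁻¹ * ((m - n : ℕ) : ℝ≥0∞)⁻¹ * ((m : ℝ≥0∞) ^ (y + 1))⁻¹ +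
      ((n : ℝ≥0∞) ^ (x + 1))⁻¹ * ((m : ℝ≥0∞) ^ (y + 1))⁻¹ := by
  obtain ⟨d, rfl⟩ := Nat.exists_eq_add_of_lt h
  have e : n + d + 1 - n = d + 1 := by omega
  rw [e]
  have key : ∀ t : ℕ, 0 < t → (t : ℝ≥0∞) = ENNReal.ofNNReal (t : NNReal) := by
    intro t _; simp
  have hn' : (n : NNReal) ≠ 0 := by positivity
  have hd' : ((d + 1 : ℕ) : NNReal) ≠ 0 := by positivity
  have hm' : ((n + d + 1 : ℕ) : NNReal) ≠ 0 := by positivity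
  rw [key n hn, key (d + 1) (by omega), key (n + d + 1) (by omega)]
  simp only [← ENNReal.coe_pow]
  rw [← ENNReal.coe_inv (pow_ne_zero _ hn'), ← ENNReal.coe_inv (pow_ne_zero _ hn'),
    ← ENNReal.coe_inv hd', ← ENNReal.coe_inv (pow_ne_zero _ hm'),
    ← ENNReal.coe_inv (pow_ne_zero _ hm')]
  simp only [← ENNReal.coe_mul, ← ENNReal.coe_add]
  congr 1
  have e2 : ((n + d + 1 : ℕ) : NNReal) = n + ((d + 1 : ℕ) : NNReal) := by push_cast; ring
  rw [e2] at hm' ⊢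
  generalize (n : NNReal) = N at *
  generalize ((d + 1 : ℕ) : NNReal) = D at *
  field_simp
  ring

theorem main_f (a b : ℕ) (k k' l l' : ℕ → ℕ) (hka : 1 ≤ k a)
    (hk' : ∀ i < a, k' i = k i) (hk'a : k' a = k a + 1)
    (hl' : ∀ j, l' (j + 1) = l (j + 1)) (hl0 : l' 0 = l 0 + 1) :
    ZHf (a + 1) (b + 1) k' l = ZHf (a + 1) (b + 1) k l' + Tserf (a + 1) (b + 1) k l' := by
  unfold ZHf Tserf
  rw [← ENNReal.tsum_add]
  refine tsum_congr fun p => ?_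
  by_cases hp : p ∈ {p : (Fin (a + 1) → ℕ) × (Fin (b + 1) → ℕ) |
        (∀ i, 0 < p.1 i) ∧ StrictMono p.1 ∧ StrictMono p.2 ∧
          lastD 0 p.1 < headD 0 p.2}
  · rw [Set.indicator_of_mem hp, Set.indicator_of_mem hp, Set.indicator_of_mem hp]
    obtain ⟨h0, -, -, h⟩ := hp
    have e1 : lastD 0 p.1 = p.1 (Fin.last a) := by simp [lastD]; rfl
    have e2 : headD 0 p.2 = p.2 0 := by simp [headD]
    rw [e1, e2] at h ⊢
    obtain ⟨x, hx⟩ := Nat.exists_eq_add_of_le' hka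
    have c := core _ _ (h0 (Fin.last a)) h x (l 0)
    have hne : ∀ i : Fin a, (i : ℕ) ≠ a := fun i => i.2.ne
    simp only [Fin.prod_univ_castSucc (n := a), Fin.prod_univ_succ (n := b), Fin.val_castSucc,
      Fin.val_last, Fin.val_succ, Fin.val_zero, hl', hl0, hk'a, hx, Nat.add_sub_cancel, if_true,
      hne, if_false, fun i : Fin a => hk' i i.2]
    generalize (∏ i : Fin a, ((p.1 i.castSucc : ℝ≥0∞) ^ k i)⁻¹) = P
    generalize (∏ i : Fin b, ((p.2 i.succ : ℝ≥0∞) ^ l (i + 1))⁻¹) = Q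
    calc _ = P * Q * (((p.1 (Fin.last a) : ℝ≥0∞) ^ (x + 1))⁻¹ *
          ((p.2 0 - p.1 (Fin.last a) : ℕ) : ℝ≥0∞)⁻¹ * ((p.2 0 : ℝ≥0∞) ^ (l 0))⁻¹) := by ring
      _ = _ := by rw [c]; ring
  · rw [Set.indicator_of_notMem hp, Set.indicator_of_notMem hp, Set.indicator_of_notMem hp,
      add_zero]

theorem upLast_concat (k : List ℕ) (x : ℕ) : upLast (k ++ [x]) = k ++ [x + 1] := by
  unfold upLast
  split
  · simp_all
  · simp [List.getLast!_eq_getLast?_getD]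

/-- **Transport relation for Hoffman's connected sum:**
for a nonempty index `k` and a nonempty index `l` which is admissible or equal to `(1)`,
`Z^H(k_↑; l) = Z^H(k; ↑l) + T(k; ↑l)` in `[0,∞]`. -/
theorem ZH_transport_up (k l : List ℕ)
    (hk : k ≠ []) (hk1 : ∀ i ∈ k, 1 ≤ i)
    (hl : l ≠ []) (hl1 : ∀ i ∈ l, 1 ≤ i)
    (hla : 2 ≤ l.getLast hl ∨ l = [1]) :
    ZH (upLast k) l = ZH k (upFirst l) + Tser k (upFirst l) := by
  obtain ⟨k, x, rfl⟩ := List.eq_nil_or_concat k |>.resolve_left hk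
  obtain ⟨y, l, rfl⟩ := List.exists_cons_of_ne_nil hl
  rw [List.concat_eq_append] at *
  rw [upLast_concat, ZH_eq, ZH_eq, Tser_eq]
  simp only [upFirst, List.length_append, List.length_cons, List.length_nil, zero_add]
  apply main_f
  · simpa using hk1 x (by simp)
  · intro i hi
    simp [List.getElem?_append_left hi]
  · simp
  · intro j
    simp
  · simp
end
end
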